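/- The multiple-conclusion logic ⊩_⊞ is the smallest multiple-conclusion consequence relation containing the two rules ({p,q}, {p⊞q}) and ({p⊞q}, {p,q}): the intersection of all relations ⊩ ⊆ ℘(L_⊞) × ℘(L_⊞) which satisfy overlap, dilution, cut and substitution invariance and for which {p,q} ⊩ {p⊞q} and {p⊞q} ⊩ {p,q}, equals ⊩_⊞. -/

import Mathlib

/-- Formulas built from countably many propositional variables with a single
binary connective `⊞` (platypus). -/
inductive Fm : Type where
  | var : ℕ → Fm
  | pl : Fm → Fm → Fm
deriving DecidableEq

namespace Fm

/-- The set of propositional variables occurring in a formula. -/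
def vars : Fm → Set ℕ
  | var n => {n}
  | pl a b => vars a ∪ vars b

/-- A `𝔅_⊞`-valuation: a two-valued function such that
`v (φ ⊞ ψ) ∈ {min (v φ) (v ψ), max (v φ) (v ψ)}`. -/
def IsVal (v : Fm → Bool) : Prop :=
  ∀ a b : Fm, v (a.pl b) = (v a && v b) ∨ v (a.pl b) = (v a || v b)

/-- The multiple-conclusion consequence `Γ ⊩_⊞ Δ`. -/
def Mc (Γ Δ : Set Fm) : Prop :=
  ∀ v : Fm → Bool, IsVal v → (∀ φ ∈ Γ, v φ = true) → ∃ ψ ∈ Δ, v ψ = true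

/-- The single-conclusion consequence `Γ ⊢_⊞ φ`. -/
def Sc (Γ : Set Fm) (φ : Fm) : Prop := Mc Γ {φ}

end Fm

namespace Fm

/-- Homomorphic extension of a substitution `σ : P → L_⊞` to formulas. -/
def subst (σ : ℕ → Fm) : Fm → Fm
  | var n => σ n
  | pl a b => (subst σ a).pl (subst σ b)

/-- A (Scottian) multiple-conclusion consequence relation: overlap, dilution,
cut (for every partition `⟨Ω, Ωᶜ⟩` of the language) and substitution
invariance. -/
def IsMCR (C : Set Fm → Set Fm → Prop) : Prop :=
  (∀ Γ Δ : Set Fm, (Γ ∩ Δ).Nonempty → C Γ Δ) ∧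
  (∀ Γ Γ' Δ Δ' : Set Fm, C Γ Δ → C (Γ ∪ Γ') (Δ ∪ Δ')) ∧
  (∀ Γ Δ : Set Fm, (∀ Ω : Set Fm, C (Γ ∪ Ω) (Ωᶜ ∪ Δ)) → C Γ Δ) ∧
  (∀ (σ : ℕ → Fm) (Γ Δ : Set Fm), C Γ Δ → C (subst σ '' Γ) (subst σ '' Δ))

end Fm

theorem Fm.isVal_subst (v : Fm → Bool) (hv : Fm.IsVal v) (σ : ℕ → Fm) :
    Fm.IsVal (fun φ => v (Fm.subst σ φ)) := fun a b => hv (Fm.subst σ a) (Fm.subst σ b)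

theorem Fm.isMCR_Mc : Fm.IsMCR Fm.Mc := by
  refine ⟨?_, ?_, ?_, ?_⟩
  · rintro Γ Δ ⟨φ, h1, h2⟩ v _ h
    exact ⟨φ, h2, h φ h1⟩
  · intro Γ Γ' Δ Δ' h v hv hΓ
    obtain ⟨ψ, h1, h2⟩ := h v hv (fun φ hφ => hΓ φ (Or.inl hφ))
    exact ⟨ψ, Or.inl h1, h2⟩
  · intro Γ Δ h v hv hΓ
    obtain ⟨ψ, h1, h2⟩ := h {φ | v φ = true} v hv (by
      rintro φ (hφ | hφ)
      · exact hΓ φ hφ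
      · exact hφ)
    rcases h1 with h1 | h1
    · exact absurd h2 h1
    · exact ⟨ψ, h1, h2⟩
  · intro σ Γ Δ h v hv hΓ
    obtain ⟨ψ, h1, h2⟩ := h _ (Fm.isVal_subst v hv σ)
      (fun φ hφ => hΓ _ (Set.mem_image_of_mem _ hφ))
    exact ⟨_, Set.mem_image_of_mem _ h1, h2⟩

open Fm in
/-- `⊩_⊞` is the smallest multiple-conclusion consequence
relation containing the rules `({p,q}, {p ⊞ q})` and `({p ⊞ q}, {p,q})`:
the intersection of all relations satisfying overlap, dilution, cut and
substitution invariance which contain the two rules equals `⊩_⊞`. -/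
theorem platypus_mc_axiomatization (Γ Δ : Set Fm) :
    (∀ C : Set Fm → Set Fm → Prop, IsMCR C →
      C {Fm.var 0, Fm.var 1} {(Fm.var 0).pl (Fm.var 1)} →
      C {(Fm.var 0).pl (Fm.var 1)} {Fm.var 0, Fm.var 1} →
      C Γ Δ) ↔ Mc Γ Δ := by
  classical
  constructor
  · intro h
    apply h Mc Fm.isMCR_Mc
    · intro v hv h
      have h0 := h (Fm.var 0) (by simp)
      have h1 := h (Fm.var 1) (by simp)
      refine ⟨_, rfl, ?_⟩
      rcases hv (Fm.var 0) (Fm.var 1) with h2 | h2 <;> simp [h2, h0, h1]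
    · intro v hv h
      have h0 := h _ rfl
      rcases hv (Fm.var 0) (Fm.var 1) with h2 | h2
      · rw [h0] at h2
        exact ⟨Fm.var 0, by simp, by simp_all⟩
      · rw [h0] at h2
        have h3 : v (Fm.var 0) = true ∨ v (Fm.var 1) = true := by simpa using h2.symm
        rcases h3 with h3 | h3
        · exact ⟨_, by simp, h3⟩
        · exact ⟨_, by simp, h3⟩
  · rintro hM C ⟨hO, hD, hC, hS⟩ r1 r2
    apply hC
    intro Ω
    have mono : ∀ A B A' B' : Set Fm, C A B → A ⊆ A' → B ⊆ B' → C A' B' := by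
      intro A B A' B' h hA hB
      have := hD A A' B B' h
      rwa [Set.union_eq_self_of_subset_left hA, Set.union_eq_self_of_subset_left hB] at this
    by_cases hv : IsVal (fun φ => decide (φ ∈ Ω))
    · by_cases hΓ : ∀ φ ∈ Γ, φ ∈ Ω
      · obtain ⟨ψ, h1, h2⟩ := hM _ hv (fun φ hφ => by simpa using hΓ φ hφ)
        exact hO _ _ ⟨ψ, Or.inr (by simpa using h2), Or.inr h1⟩
      · push Not at hΓ
        obtain ⟨φ, h1, h2⟩ := hΓ
        exact hO _ _ ⟨φ, Or.inl h1, Or.inl h2⟩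
    · unfold IsVal at hv
      push Not at hv
      obtain ⟨a, b, h1, h2⟩ := hv
      have s1 := hS (fun n => if n = 0 then a else b) _ _ r1
      have s2 := hS (fun n => if n = 0 then a else b) _ _ r2
      simp only [Set.image_pair, Set.image_singleton, subst, if_true, one_ne_zero,
        if_false] at s1 s2
      by_cases ha : a ∈ Ω <;> by_cases hb : b ∈ Ω <;> by_cases hab : a.pl b ∈ Ω <;>
        simp [ha, hb, hab] at h1 h2
      · refine mono _ _ _ _ s1 ?_ ?_
        · rintro x (rfl | rfl)
          · exact Or.inr ha
          · exact Or.inr hb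
        · rintro x rfl
          exact Or.inl hab
      · refine mono _ _ _ _ s2 ?_ ?_
        · rintro x rfl
          exact Or.inr hab
        · rintro x (rfl | rfl)
          · exact Or.inl ha
          · exact Or.inl hb
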